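/- arXiv:1807.02884 — 2 statements merged into one kernel-verified Lean document; each statement's English description precedes it below -/
import Mathlib

section
/- Let r and s be positive integers and c_1, …, c_r nonzero real numbers, not all positive. Let h(n) be a nondecreasing function with h(n) = Ω(1) and h(n) = o(n^{s/2}/log n). For each i ∈ [r], let Y_i ∼ Bin(N_i, p_i) be independent with N_i = (1+o(1)) ρ_i · h(n) C(n,s) and p_i = (1+o(1)) α_i · log n / C(n,s), where ρ_i, α_i > 0 are constants. Set X = ∑_{i=1}^r c_i Y_i and suppose ∑_{i=1}^r c_i α_i ρ_i > 0. Then for any δ ∈ (−∞, ∑_{i=1}^r c_i α_i ρ_i), Pr(X ≤ (1+o(1)) δ · h(n) log n) = exp(−(1+o(1)) I* · h(n) log n), where I* = max_{t ≥ 0} ( −tδ + ∑_{i=1}^r α_i ρ_i (1 − e^{−t c_i}) ). -/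
open Finset Filter

open scoped Classical

/-- The binomial probability mass function: `Pr(Bin(N,p) = y)`. -/
noncomputable def binomPMF (N : ℕ) (p : ℝ) (y : ℕ) : ℝ :=
  (N.choose y : ℝ) * p ^ y * (1 - p) ^ (N - y)


lemma wbt_log_factorial_le (y : ℕ) (hy : 1 ≤ y) :
    Real.log (y.factorial : ℝ) ≤ ((y : ℝ) + 1) * Real.log y - y + 1 := by
  induction y, hy using Nat.le_induction with
  | base => simp
  | succ y hy ih =>
    have hy0 : (0 : ℝ) < y := by exact_mod_cast hy
    rw [Nat.factorial_succ]
    push_cast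
    rw [Real.log_mul (by positivity) (by positivity)]
    have h1 := Real.one_sub_inv_le_log_of_pos (x := ((y : ℝ) + 1) / y) (by positivity)
    rw [Real.log_div (by positivity) (by positivity)] at h1
    have h2 : ((y : ℝ) + 1) * (1 - (((y : ℝ) + 1) / y)⁻¹) = 1 := by
      field_simp
      ring
    have h3 := mul_le_mul_of_nonneg_left h1 (by positivity : (0 : ℝ) ≤ (y : ℝ) + 1)
    rw [h2] at h3
    nlinarith

lemma wbt_pmf_lower_pt (N y : ℕ) (p : ℝ) (hp : 0 < p) (hp1 : p < 1) (hy : 1 ≤ y) (hyN : y < N) :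
    Real.exp ((y : ℝ) * Real.log (((N : ℝ) - y) * p / y) - Real.log y + y - 1
      - (N : ℝ) * p / (1 - p)) ≤ binomPMF N p y := by
  have hy0 : (0 : ℝ) < y := by exact_mod_cast hy
  have hNy : (0 : ℝ) < (N : ℝ) - y := by
    have : (y : ℝ) < N := by exact_mod_cast hyN
    linarith
  have hq : 0 < 1 - p := by linarith
  have hchoose : ((N : ℝ) - y) ^ y / (y.factorial : ℝ) ≤ (N.choose y : ℝ) := by
    rw [div_le_iff₀ (by positivity)]
    have h1 := Nat.pow_sub_le_descFactorial N y
    rw [Nat.descFactorial_eq_factorial_mul_choose] at h1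
    have h2 : (N - y) ^ y ≤ (N + 1 - y) ^ y := Nat.pow_le_pow_left (by omega) _
    have h3 : (((N - y) ^ y : ℕ) : ℝ) ≤ ((y.factorial * N.choose y : ℕ) : ℝ) := by
      exact_mod_cast h2.trans h1
    push_cast [Nat.cast_sub hyN.le] at h3
    linarith
  have hpow : (1 - p) ^ N ≤ (1 - p) ^ (N - y) :=
    pow_le_pow_of_le_one hq.le (by linarith) (Nat.sub_le _ _)
  have hb : ((N : ℝ) - y) ^ y / (y.factorial : ℝ) * p ^ y * (1 - p) ^ N ≤ binomPMF N p y := by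
    unfold binomPMF
    gcongr
  refine le_trans ?_ hb
  rw [← Real.le_log_iff_exp_le (by positivity)]
  rw [Real.log_mul (by positivity) (by positivity), Real.log_mul (by positivity) (by positivity),
    Real.log_div (pow_pos hNy y).ne' (by positivity), Real.log_pow, Real.log_pow, Real.log_pow,
    Real.log_div (by positivity) (by positivity), Real.log_mul (by positivity) (by positivity)]
  have h1 := wbt_log_factorial_le y hy
  have h2 := Real.one_sub_inv_le_log_of_pos hq
  have h3 := mul_le_mul_of_nonneg_left h2 (Nat.cast_nonneg N : (0 : ℝ) ≤ N)
  have h4 : (N : ℝ) * (1 - (1 - p)⁻¹) = - ((N : ℝ) * p / (1 - p)) := by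
    field_simp
    ring
  rw [h4] at h3
  nlinarith

lemma wbt_pmf_lower (N y : ℕ → ℕ) (p L : ℕ → ℝ) (μ θ : ℝ) (hμ : 0 < μ) (hθ : 0 < θ)
    (hL : Tendsto L atTop atTop) (hp : Tendsto p atTop (nhds 0))
    (hNp : Tendsto (fun n => (N n : ℝ) * p n / L n) atTop (nhds μ))
    (hy : Tendsto (fun n => (y n : ℝ) / L n) atTop (nhds θ)) :
    ∃ g : ℕ → ℝ, Tendsto g atTop (nhds (θ * Real.log (μ / θ) + θ - μ)) ∧
      ∀ᶠ n in atTop, y n ≤ N n ∧ Real.exp (g n * L n) ≤ binomPMF (N n) (p n) (y n) := by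
  have hinv : Tendsto (fun n => 1 / L n) atTop (nhds 0) := by
    exact hL.inv_tendsto_atTop.congr fun n => (one_div (L n)).symm
  have hLpos : ∀ᶠ n in atTop, 0 < L n := hL.eventually_gt_atTop 0
  have hyt : Tendsto (fun n => (y n : ℝ)) atTop atTop := by
    have := hy.pos_mul_atTop hθ hL
    refine this.congr' ?_
    filter_upwards [hLpos] with n hn
    field_simp
  have hlog : Tendsto (fun n => Real.log (y n) / (y n : ℝ)) atTop (nhds 0) := by
    have h0 : Tendsto (fun x : ℝ => Real.log x / x) atTop (nhds 0) := by
      simpa using Real.isLittleO_log_id_atTop.tendsto_div_nhds_zero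
    exact h0.comp hyt
  have hlog2 := hlog.mul hy
  have hm : Tendsto (fun n => (N n : ℝ) * p n / L n - (y n : ℝ) / L n * p n) atTop (nhds μ) := by
    simpa using hNp.sub (hy.mul hp)
  have hd := hm.div hy hθ.ne'
  have hl := hd.log (div_pos hμ hθ).ne'
  have hq : Tendsto (fun n => 1 - p n) atTop (nhds 1) := by
    simpa using hp.const_sub 1
  have hfin := ((((hy.mul hl).sub hlog2).add hy).sub hinv).sub (hNp.div hq one_ne_zero)
  refine ⟨_, by convert hfin using 2; simp, ?_⟩
  filter_upwards [hLpos, hm.eventually (lt_mem_nhds hμ), hNp.eventually (lt_mem_nhds hμ),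
    hp.eventually (gt_mem_nhds one_pos), hyt.eventually_ge_atTop 1] with n h1 h2 h3 h4 h5
  have hpn : 0 < p n := by
    have : 0 < (N n : ℝ) * p n := by
      rcases div_pos_iff.1 h3 with h | h
      · exact h.1
      · linarith [h.2]
    exact pos_of_mul_pos_right this (Nat.cast_nonneg _)
  have hyN : y n < N n := by
    have e : (N n : ℝ) * p n / L n - (y n : ℝ) / L n * p n = ((N n : ℝ) - y n) * (p n / L n) := by
      ring
    rw [e] at h2
    have : 0 < (N n : ℝ) - y n := pos_of_mul_pos_left h2 (by positivity)
    have : (y n : ℝ) < N n := by linarith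
    exact_mod_cast this
  have hy1 : 1 ≤ y n := by exact_mod_cast h5
  refine ⟨hyN.le, ?_⟩
  refine le_trans (le_of_eq ?_) (wbt_pmf_lower_pt (N n) (y n) (p n) hpn h4 hy1 hyN)
  congr 1
  have hy0 : (0 : ℝ) < y n := by linarith
  have e : ((N n : ℝ) * p n / L n - (y n : ℝ) / L n * p n) / ((y n : ℝ) / L n)
      = ((N n : ℝ) - y n) * p n / y n := by
    field_simp
  simp only [Pi.div_apply, e]
  have : 1 - p n ≠ 0 := by linarith
  field_simp

lemma wbt_mgf (N : ℕ) (p t : ℝ) (hp : 0 ≤ p) (hp1 : p ≤ 1) :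
    ∑ y : Fin (N + 1), binomPMF N p y * Real.exp (t * ((y : ℕ) : ℝ))
      ≤ Real.exp ((N : ℝ) * p * (Real.exp t - 1)) := by
  rw [← Finset.sum_range (fun y => binomPMF N p y * Real.exp (t * (y : ℝ)))]
  have e : ∑ y ∈ range (N + 1), binomPMF N p y * Real.exp (t * (y : ℝ))
      = (p * Real.exp t + (1 - p)) ^ N := by
    rw [add_pow]
    refine Finset.sum_congr rfl fun y _ => ?_
    unfold binomPMF
    rw [mul_pow, ← Real.exp_nat_mul, mul_comm t]
    ring
  rw [e, mul_assoc, Real.exp_nat_mul]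
  refine pow_le_pow_left₀ ?_ ?_ _
  · have := Real.exp_pos t
    nlinarith [mul_nonneg hp this.le]
  · have := Real.add_one_le_exp (p * (Real.exp t - 1))
    linarith

lemma wbt_pmf_nonneg (N y : ℕ) (p : ℝ) (hp : 0 ≤ p) (hp1 : p ≤ 1) : 0 ≤ binomPMF N p y := by
  unfold binomPMF
  have : 0 ≤ 1 - p := by linarith
  positivity

lemma wbt_upper (r : ℕ) (c : Fin r → ℝ) (N : Fin r → ℕ) (p : Fin r → ℝ)
    (hp : ∀ i, 0 ≤ p i) (hp1 : ∀ i, p i ≤ 1) (x t : ℝ) (ht : 0 ≤ t) :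
    (∑ y : (i : Fin r) → Fin (N i + 1),
            (∏ i, binomPMF (N i) (p i) (y i)) *
              (if (∑ i, c i * ((y i : ℕ) : ℝ)) ≤ x then 1 else 0))
      ≤ Real.exp (t * x + ∑ i, (N i : ℝ) * p i * (Real.exp (-t * c i) - 1)) := by
  have step : ∀ y : (i : Fin r) → Fin (N i + 1),
      (∏ i, binomPMF (N i) (p i) (y i)) *
              (if (∑ i, c i * ((y i : ℕ) : ℝ)) ≤ x then 1 else 0)
      ≤ Real.exp (t * x) *
        ∏ i, (binomPMF (N i) (p i) (y i) * Real.exp (-t * c i * ((y i : ℕ) : ℝ))) := by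
    intro y
    have h0 : 0 ≤ ∏ i, binomPMF (N i) (p i) (y i) :=
      Finset.prod_nonneg fun i _ => wbt_pmf_nonneg _ _ _ (hp i) (hp1 i)
    rw [Finset.prod_mul_distrib, ← Real.exp_sum, mul_left_comm, ← Real.exp_add]
    refine mul_le_mul_of_nonneg_left ?_ h0
    have e : ∑ i, -t * c i * ((y i : ℕ) : ℝ) = -t * ∑ i, c i * ((y i : ℕ) : ℝ) := by
      rw [Finset.mul_sum]
      exact Finset.sum_congr rfl fun i _ => by ring
    rw [e]
    split_ifs with hc
    · apply Real.one_le_exp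
      nlinarith
    · positivity
  refine (Finset.sum_le_sum fun y _ => step y).trans ?_
  rw [← Finset.mul_sum, Real.exp_add, Real.exp_sum]
  refine mul_le_mul_of_nonneg_left ?_ (Real.exp_pos _).le
  have e := (Fintype.prod_sum (fun (i : Fin r) (j : Fin (N i + 1)) =>
    binomPMF (N i) (p i) j * Real.exp (-t * c i * ((j : ℕ) : ℝ))))
  rw [← e]
  refine Finset.prod_le_prod (fun i _ => Finset.sum_nonneg fun j _ =>
    mul_nonneg (wbt_pmf_nonneg _ _ _ (hp i) (hp1 i)) (Real.exp_pos _).le) fun i _ => ?_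
  exact wbt_mgf (N i) (p i) (-t * c i) (hp i) (hp1 i)

lemma wbt_tstar (r : ℕ) (c μ : Fin r → ℝ) (hμ : ∀ i, 0 < μ i) (hc : ∀ i, c i ≠ 0)
    (i₀ : Fin r) (hi₀ : c i₀ < 0) (δ : ℝ) (hδ : δ < ∑ i, c i * μ i) :
    ∃ t : ℝ, 0 < t ∧ ∑ i, c i * (μ i * Real.exp (-t * c i)) = δ := by
  have hcont : Continuous fun t : ℝ => ∑ i, c i * (μ i * Real.exp (-t * c i)) := by fun_prop
  have hk : 0 < μ i₀ * c i₀ ^ 2 := mul_pos (hμ _) (by have := hc i₀; positivity)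
  set B := ∑ i, μ i * |c i| with hB
  have hbound : ∀ T : ℝ, 0 ≤ T →
      ∑ i, c i * (μ i * Real.exp (-T * c i)) ≤ B - μ i₀ * c i₀ ^ 2 * T := by
    intro T hT
    have : B - μ i₀ * c i₀ ^ 2 * T
        = ∑ i, (μ i * |c i| - if i = i₀ then μ i₀ * c i₀ ^ 2 * T else 0) := by
      rw [Finset.sum_sub_distrib]; simp [hB]
    rw [this]
    refine Finset.sum_le_sum fun i _ => ?_
    have hm := hμ i
    have hexp := Real.exp_pos (-T * c i)
    split_ifs with h
    · subst h
      rw [abs_of_neg hi₀]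
      have h1 := Real.add_one_le_exp (-T * c i)
      have h2 : 0 ≤ μ i * (-c i) := by nlinarith
      have h3 := mul_le_mul_of_nonneg_left h1 h2
      nlinarith
    · rcases lt_or_gt_of_ne (hc i) with hi | hi
      · have h1 : 0 ≤ μ i * |c i| := by positivity
        have h2 : 0 ≤ μ i * Real.exp (-T * c i) := by positivity
        nlinarith
      · rw [abs_of_pos hi]
        have h1 : Real.exp (-T * c i) ≤ 1 := Real.exp_le_one_iff.2 (by nlinarith)
        have h2 : 0 ≤ μ i * c i := by positivity
        nlinarith
  set T := |B - δ| / (μ i₀ * c i₀ ^ 2) with hT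
  have hT0 : 0 ≤ T := by positivity
  have hTb : ∑ i, c i * (μ i * Real.exp (-T * c i)) ≤ δ := by
    refine (hbound T hT0).trans ?_
    rw [hT, mul_div_cancel₀ _ hk.ne']
    linarith [le_abs_self (B - δ)]
  obtain ⟨t, ht, hte⟩ := intermediate_value_Icc' hT0 hcont.continuousOn
    (show δ ∈ Set.Icc _ _ from ⟨hTb, by simpa using hδ.le⟩)
  refine ⟨t, lt_of_le_of_ne ht.1 ?_, hte⟩
  rintro rfl
  simp at hte
  linarith

lemma wbt_sSup (r : ℕ) (c μ : Fin r → ℝ) (hμ : ∀ i, 0 < μ i) (δ t : ℝ) (ht : 0 < t)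
    (he : ∑ i, c i * (μ i * Real.exp (-t * c i)) = δ) :
    sSup {z : ℝ | ∃ t : ℝ, 0 ≤ t ∧
                  z = -t * δ + ∑ i, μ i * (1 - Real.exp (-t * c i))}
      = -t * δ + ∑ i, μ i * (1 - Real.exp (-t * c i)) := by
  refine IsGreatest.csSup_eq ⟨⟨t, ht.le, rfl⟩, ?_⟩
  rintro z ⟨u, hu, rfl⟩
  have key : ∑ i, μ i * (1 - Real.exp (-u * c i)) ≤
      ∑ i, μ i * (1 - Real.exp (-t * c i)) +
        (u - t) * ∑ i, c i * (μ i * Real.exp (-t * c i)) := by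
    rw [Finset.mul_sum, ← Finset.sum_add_distrib]
    refine Finset.sum_le_sum fun i _ => ?_
    have h1 := Real.add_one_le_exp (-u * c i - -t * c i)
    have e : Real.exp (-u * c i) = Real.exp (-t * c i) * Real.exp (-u * c i - -t * c i) := by
      rw [← Real.exp_add]; congr 1; ring
    have h2 := mul_le_mul_of_nonneg_left h1
      (mul_pos (hμ i) (Real.exp_pos (-t * c i))).le
    rw [e]
    linarith
  rw [he] at key
  linarith

lemma wbt_Ipos (r : ℕ) (hr : 0 < r) (c μ : Fin r → ℝ) (hμ : ∀ i, 0 < μ i) (hc : ∀ i, c i ≠ 0)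
    (δ t : ℝ) (ht : 0 < t)
    (he : ∑ i, c i * (μ i * Real.exp (-t * c i)) = δ) :
    0 < -t * δ + ∑ i, μ i * (1 - Real.exp (-t * c i)) := by
  rw [← he, Finset.mul_sum, ← Finset.sum_add_distrib]
  have : Nonempty (Fin r) := ⟨⟨0, hr⟩⟩
  refine Finset.sum_pos (fun i _ => ?_) Finset.univ_nonempty
  have h1 := Real.add_one_lt_exp (x := t * c i) (mul_ne_zero ht.ne' (hc i))
  have h2 := mul_lt_mul_of_pos_left h1 (mul_pos (hμ i) (Real.exp_pos (-t * c i)))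
  have e : Real.exp (-t * c i) * Real.exp (t * c i) = 1 := by
    rw [← Real.exp_add]; simp
  rw [mul_assoc, mul_assoc, e] at h2
  linarith

lemma wbt_points (r : ℕ) (c θ : Fin r → ℝ) (hθ : ∀ i, 0 < θ i) (i₀ : Fin r) (hi₀ : c i₀ < 0)
    (δ : ℝ) (he : ∑ i, c i * θ i = δ) (L x : ℕ → ℝ) (hL : Tendsto L atTop atTop)
    (hx : Tendsto (fun n => x n / L n) atTop (nhds δ)) :
    ∃ y : Fin r → ℕ → ℕ, (∀ i, Tendsto (fun n => (y i n : ℝ) / L n) atTop (nhds (θ i))) ∧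
      ∀ n, ∑ i, c i * (y i n : ℝ) ≤ x n := by
  have hLpos : ∀ᶠ n in atTop, 0 < L n := hL.eventually_gt_atTop 0
  have hinv : Tendsto (fun n => 1 / L n) atTop (nhds 0) := by
    exact hL.inv_tendsto_atTop.congr fun n => (one_div (L n)).symm
  have ceil_lim : ∀ (u : ℕ → ℝ) (τ : ℝ), 0 < τ → Tendsto (fun n => u n / L n) atTop (nhds τ) →
      Tendsto (fun n => (⌈u n⌉₊ : ℝ) / L n) atTop (nhds τ) := by
    intro u τ hτ hu
    have hu2 : Tendsto (fun n => u n / L n + 1 / L n) atTop (nhds τ) := by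
      simpa using hu.add hinv
    refine tendsto_of_tendsto_of_tendsto_of_le_of_le' hu hu2 ?_ ?_
    · filter_upwards [hLpos] with n hn
      exact div_le_div_of_nonneg_right (Nat.le_ceil _) hn.le
    · filter_upwards [hLpos, hu.eventually (lt_mem_nhds hτ)] with n hn hun
      rw [← add_div]
      have : 0 < u n := by
        rcases div_pos_iff.1 hun with h | h
        · exact h.1
        · linarith [h.2]
      exact div_le_div_of_nonneg_right (Nat.ceil_lt_add_one this.le).le hn.le
  set w : Fin r → ℕ → ℕ := fun i n => ⌈θ i * L n⌉₊ with hw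
  have hwl : ∀ i, Tendsto (fun n => (w i n : ℝ) / L n) atTop (nhds (θ i)) := by
    intro i
    refine ceil_lim _ _ (hθ i) (tendsto_const_nhds.congr' ?_)
    filter_upwards [hLpos] with n hn
    field_simp
  set v : ℕ → ℝ := fun n => ((∑ i ∈ univ.erase i₀, c i * (w i n : ℝ)) - x n) / (-c i₀) with hv
  have hvl : Tendsto (fun n => v n / L n) atTop (nhds (θ i₀)) := by
    have h1 : Tendsto (fun n => ((∑ i ∈ univ.erase i₀, c i * ((w i n : ℝ) / L n)) - x n / L n)
        / (-c i₀)) atTop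
        (nhds (((∑ i ∈ univ.erase i₀, c i * θ i) - δ) / (-c i₀))) :=
      ((tendsto_finsetSum _ fun i _ => (hwl i).const_mul (c i)).sub hx).div_const _
    have e : ((∑ i ∈ univ.erase i₀, c i * θ i) - δ) / (-c i₀) = θ i₀ := by
      rw [← he, ← Finset.add_sum_erase _ _ (mem_univ i₀)]
      have := hi₀.ne
      field_simp
      ring
    rw [e] at h1
    refine h1.congr fun n => ?_
    simp only [hv]
    rw [div_right_comm, sub_div (∑ i ∈ univ.erase i₀, c i * (w i n : ℝ)), Finset.sum_div]
    simp only [mul_div_assoc]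
  refine ⟨fun i n => if i = i₀ then ⌈v n⌉₊ else w i n, fun i => ?_, fun n => ?_⟩
  · by_cases h : i = i₀
    · subst h
      simpa using ceil_lim v _ (hθ i) hvl
    · simpa [h] using hwl i
  · rw [← Finset.add_sum_erase _ _ (mem_univ i₀)]
    have e : ∑ i ∈ univ.erase i₀, c i * ((if i = i₀ then ⌈v n⌉₊ else w i n : ℕ) : ℝ)
        = ∑ i ∈ univ.erase i₀, c i * (w i n : ℝ) :=
      Finset.sum_congr rfl fun i hi => by rw [if_neg (Finset.ne_of_mem_erase hi)]
    simp only [e, if_true]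
    have h1 := Nat.le_ceil (v n)
    have h2 := mul_le_mul_of_nonneg_left h1 (neg_pos.2 hi₀).le
    have h3 : -c i₀ * v n = (∑ i ∈ univ.erase i₀, c i * (w i n : ℝ)) - x n := by
      simp only [hv]
      exact mul_div_cancel₀ _ (neg_pos.2 hi₀).ne'
    linarith

lemma wbt_main (r : ℕ) (hr : 0 < r) (c μ : Fin r → ℝ) (hμ : ∀ i, 0 < μ i) (hc : ∀ i, c i ≠ 0)
    (hcpos : ¬ ∀ i, 0 < c i)
    (δ : ℝ) (hδ : δ < ∑ i, c i * μ i)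
    (L x : ℕ → ℝ) (hL : Tendsto L atTop atTop)
    (hx : Tendsto (fun n => x n / L n) atTop (nhds δ))
    (N : Fin r → ℕ → ℕ) (p : Fin r → ℕ → ℝ)
    (hp : ∀ i, Tendsto (p i) atTop (nhds 0))
    (hNp : ∀ i, Tendsto (fun n => (N i n : ℝ) * p i n / L n) atTop (nhds (μ i))) :
    ∃ ε : ℕ → ℝ, Tendsto ε atTop (nhds 0) ∧
      ∀ᶠ n : ℕ in atTop,
        (∑ y : (i : Fin r) → Fin (N i n + 1),
            (∏ i, binomPMF (N i n) (p i n) (y i)) *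
              (if (∑ i, c i * ((y i : ℕ) : ℝ)) ≤ x n then 1 else 0))
          = Real.exp (-((1 + ε n) *
              (sSup {z : ℝ | ∃ t : ℝ, 0 ≤ t ∧
                  z = -t * δ + ∑ i, μ i * (1 - Real.exp (-t * c i))} *
                L n))) := by
  push Not at hcpos
  obtain ⟨i₀, hi₀'⟩ := hcpos
  have hi₀ : c i₀ < 0 := lt_of_le_of_ne hi₀' (hc i₀)
  obtain ⟨t, ht, he⟩ := wbt_tstar r c μ hμ hc i₀ hi₀ δ hδ
  rw [wbt_sSup r c μ hμ δ t ht he]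
  have hI := wbt_Ipos r hr c μ hμ hc δ t ht he
  set I := -t * δ + ∑ i, μ i * (1 - Real.exp (-t * c i)) with hIdef
  set P : ℕ → ℝ := fun n => (∑ y : (i : Fin r) → Fin (N i n + 1),
            (∏ i, binomPMF (N i n) (p i n) (y i)) *
              (if (∑ i, c i * ((y i : ℕ) : ℝ)) ≤ x n then 1 else 0)) with hP
  have hLpos : ∀ᶠ n in atTop, 0 < L n := hL.eventually_gt_atTop 0
  have hθ : ∀ i, 0 < μ i * Real.exp (-t * c i) := fun i => mul_pos (hμ i) (Real.exp_pos _)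
  obtain ⟨y, hyl, hyx⟩ := wbt_points r c _ hθ i₀ hi₀ δ he L x hL hx
  choose g hg hgl using fun i => wbt_pmf_lower (N i) (y i) (p i) L (μ i) _ (hμ i) (hθ i) hL
    (hp i) (hNp i) (hyl i)
  have hp0 : ∀ᶠ n in atTop, ∀ i, 0 ≤ p i n ∧ p i n ≤ 1 := by
    refine eventually_all.2 fun i => ?_
    filter_upwards [hLpos, (hNp i).eventually (lt_mem_nhds (hμ i)),
      (hp i).eventually (gt_mem_nhds one_pos)] with n h1 h3 h4
    have : 0 < (N i n : ℝ) * p i n := by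
      rcases div_pos_iff.1 h3 with h | h
      · exact h.1
      · linarith [h.2]
    exact ⟨(pos_of_mul_pos_right this (Nat.cast_nonneg _)).le, h4.le⟩
  have hlow : ∀ᶠ n in atTop, Real.exp ((∑ i, g i n) * L n) ≤ P n := by
    filter_upwards [hp0, eventually_all.2 hgl] with n h1 h2
    have h3 : Real.exp ((∑ i, g i n) * L n) ≤ ∏ i, binomPMF (N i n) (p i n) (y i n) := by
      rw [Finset.sum_mul, Real.exp_sum]
      exact Finset.prod_le_prod (fun i _ => (Real.exp_pos _).le) fun i _ => (h2 i).2
    refine h3.trans ?_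
    have h4 := Finset.single_le_sum (s := univ)
      (f := fun y : (i : Fin r) → Fin (N i n + 1) =>
        (∏ i, binomPMF (N i n) (p i n) (y i)) *
              (if (∑ i, c i * ((y i : ℕ) : ℝ)) ≤ x n then (1 : ℝ) else 0))
      (fun z _ => mul_nonneg (Finset.prod_nonneg fun i _ =>
        wbt_pmf_nonneg _ _ _ (h1 i).1 (h1 i).2) (by split_ifs <;> norm_num))
      (mem_univ (fun i => (⟨y i n, Nat.lt_succ_of_le (h2 i).1⟩ : Fin (N i n + 1))))
    refine le_trans (le_of_eq ?_) h4
    simp [hyx n]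
  have hup : ∀ᶠ n in atTop, P n ≤
      Real.exp (t * x n + ∑ i, (N i n : ℝ) * p i n * (Real.exp (-t * c i) - 1)) := by
    filter_upwards [hp0] with n h1
    exact wbt_upper r c (fun i => N i n) (fun i => p i n) (fun i => (h1 i).1)
      (fun i => (h1 i).2) (x n) t ht.le
  have hlogP : Tendsto (fun n => Real.log (P n) / L n) atTop (nhds (-I)) := by
    have l1 : Tendsto (fun n => ∑ i, g i n) atTop (nhds (-I)) := by
      have := tendsto_finsetSum univ fun i _ => hg i
      convert this using 2
      rw [hIdef, ← he, Finset.mul_sum, ← Finset.sum_add_distrib, ← Finset.sum_neg_distrib]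
      refine Finset.sum_congr rfl fun i _ => ?_
      have hm := (hμ i).ne'
      have e : μ i / (μ i * Real.exp (-t * c i)) = Real.exp (t * c i) := by
        rw [div_mul_eq_div_div, div_self hm, one_div, ← Real.exp_neg]
        congr 1; ring
      rw [e, Real.log_exp]
      ring
    have l2 : Tendsto (fun n => t * (x n / L n)
        + ∑ i, ((N i n : ℝ) * p i n / L n) * (Real.exp (-t * c i) - 1)) atTop (nhds (-I)) := by
      have := (hx.const_mul t).add (tendsto_finsetSum univ fun i _ =>
        (hNp i).mul_const (Real.exp (-t * c i) - 1))
      convert this using 2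
      rw [hIdef, neg_add, ← Finset.sum_neg_distrib]
      congr 1
      · ring
      · exact Finset.sum_congr rfl fun i _ => by ring
    refine tendsto_of_tendsto_of_tendsto_of_le_of_le' l1 l2 ?_ ?_
    · filter_upwards [hLpos, hlow] with n h1 h2
      rw [le_div_iff₀ h1, Real.le_log_iff_exp_le ((Real.exp_pos _).trans_le h2)]
      exact h2
    · filter_upwards [hLpos, hlow, hup] with n h1 h2 h3
      rw [div_le_iff₀ h1, Real.log_le_iff_le_exp ((Real.exp_pos _).trans_le h2)]
      refine h3.trans (le_of_eq ?_)
      congr 1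
      rw [add_mul, Finset.sum_mul]
      congr 1
      · field_simp
      · exact Finset.sum_congr rfl fun i _ => by field_simp
  refine ⟨fun n => -(Real.log (P n) / L n) / I - 1, ?_, ?_⟩
  · have := (hlogP.neg.div_const I).sub_const 1
    simpa [hI.ne'] using this
  · filter_upwards [hLpos, hlow] with n h1 h2
    have e : -((1 + (-(Real.log (P n) / L n) / I - 1)) * (I * L n)) = Real.log (P n) := by
      have := hI.ne'
      field_simp
      ring
    rw [e, Real.exp_log ((Real.exp_pos _).trans_le h2)]

lemma wbt_log_div_choose (s : ℕ) (hs : 0 < s) :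
    Tendsto (fun n : ℕ => Real.log n / (n.choose s : ℝ)) atTop (nhds 0) := by
  have h0 : Tendsto (fun x : ℝ => Real.log x / x) atTop (nhds 0) := by
    simpa using Real.isLittleO_log_id_atTop.tendsto_div_nhds_zero
  have h1 : Tendsto (fun n : ℕ => 2 * (Real.log n / (n : ℝ))) atTop (nhds 0) := by
    simpa using (h0.comp tendsto_natCast_atTop_atTop).const_mul 2
  refine squeeze_zero' ?_ ?_ h1
  · filter_upwards with n
    exact div_nonneg (Real.log_natCast_nonneg n) (Nat.cast_nonneg _)
  · filter_upwards [eventually_ge_atTop (2 * s)] with n hn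
    have hc : n ≤ 2 * n.choose s := by
      obtain ⟨k, rfl⟩ : ∃ k, s = k + 1 := ⟨s - 1, by omega⟩
      have h2 : n - k ≤ n.choose (k + 1) := by
        have key : ∀ m k : ℕ, m ≤ (m + k).choose (k + 1) := by
          intro m k
          induction k with
          | zero => simp
          | succ k ih =>
            rw [← add_assoc, Nat.choose_succ_succ]
            omega
        have := key (n - k) k
        rwa [Nat.sub_add_cancel (by omega)] at this
      omega
    have hn0 : (0 : ℝ) < n := by exact_mod_cast (by omega : 0 < n)
    have hc0 : (0 : ℝ) < n.choose s := by exact_mod_cast Nat.choose_pos (by omega)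
    have hc' : (n : ℝ) ≤ 2 * n.choose s := by exact_mod_cast hc
    rw [← mul_div_assoc, div_le_div_iff₀ hc0 hn0]
    nlinarith [Real.log_natCast_nonneg n]

/-- Tail probability of a weighted sum of independent binomial variables:
`Pr(X ≤ (1+o(1)) δ h(n) log n) = exp(-(1+o(1)) I* h(n) log n)` where
`I* = max_{t ≥ 0} (-tδ + ∑ᵢ αᵢρᵢ(1 - e^{-t cᵢ}))`. -/
theorem weighted_binomial_tail (r s : ℕ) (hr : 0 < r) (hs : 0 < s)
    (c : Fin r → ℝ) (hc : ∀ i, c i ≠ 0) (hcpos : ¬ ∀ i, 0 < c i)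
    (h : ℕ → ℝ) (hmono : Monotone h)
    (hΩ : ∃ c₀ : ℝ, 0 < c₀ ∧ ∀ᶠ n : ℕ in atTop, c₀ ≤ h n)
    (hlittle : Tendsto (fun n : ℕ => h n * Real.log n / (n : ℝ) ^ ((s : ℝ) / 2))
      atTop (nhds 0))
    (ρ a : Fin r → ℝ) (hρ : ∀ i, 0 < ρ i) (ha : ∀ i, 0 < a i)
    (N : Fin r → ℕ → ℕ) (p : Fin r → ℕ → ℝ)
    (hN : ∃ eN : Fin r → ℕ → ℝ, (∀ i, Tendsto (eN i) atTop (nhds 0)) ∧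
      ∀ i n, ((N i n : ℕ) : ℝ) = (1 + eN i n) * (ρ i * (h n * (n.choose s : ℝ))))
    (hp : ∃ ep : Fin r → ℕ → ℝ, (∀ i, Tendsto (ep i) atTop (nhds 0)) ∧
      ∀ i n, p i n = (1 + ep i n) * (a i * (Real.log n / (n.choose s : ℝ))))
    (δ : ℝ) (hδ : δ < ∑ i, c i * a i * ρ i)
    (x : ℕ → ℝ) (hx : ∃ ex : ℕ → ℝ, Tendsto ex atTop (nhds 0) ∧
      ∀ n, x n = (1 + ex n) * (δ * (h n * Real.log n))) :
    ∃ ε : ℕ → ℝ, Tendsto ε atTop (nhds 0) ∧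
      ∀ᶠ n : ℕ in atTop,
        (∑ y : (i : Fin r) → Fin (N i n + 1),
            (∏ i, binomPMF (N i n) (p i n) (y i)) *
              (if (∑ i, c i * ((y i : ℕ) : ℝ)) ≤ x n then 1 else 0))
          = Real.exp (-((1 + ε n) *
              (sSup {z : ℝ | ∃ t : ℝ, 0 ≤ t ∧
                  z = -t * δ + ∑ i, a i * ρ i * (1 - Real.exp (-t * c i))} *
                (h n * Real.log n)))) := by
  have hlogn : Tendsto (fun n : ℕ => Real.log n) atTop atTop :=
    Real.tendsto_log_atTop.comp tendsto_natCast_atTop_atTop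
  obtain ⟨c₀, hc₀, hh⟩ := hΩ
  have hL : Tendsto (fun n : ℕ => h n * Real.log n) atTop atTop := by
    refine tendsto_atTop_mono' _ ?_ (hlogn.const_mul_atTop hc₀)
    filter_upwards [hh] with n hn
    exact mul_le_mul_of_nonneg_right hn (Real.log_natCast_nonneg n)
  have hLpos := hL.eventually_gt_atTop 0
  obtain ⟨eN, heN, hN⟩ := hN
  obtain ⟨ep, hep, hp⟩ := hp
  obtain ⟨ex, hex, hx⟩ := hx
  refine wbt_main r hr c (fun i => a i * ρ i) (fun i => mul_pos (ha i) (hρ i)) hc hcpos δ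
    (by simpa only [mul_assoc] using hδ) (fun n => h n * Real.log n) x hL ?_ N p ?_ ?_
  · have h1 : Tendsto (fun n => (1 + ex n) * δ) atTop (nhds δ) := by
      simpa using (hex.const_add 1).mul_const δ
    refine h1.congr' ?_
    filter_upwards [hLpos] with n hn
    rw [hx n, ← mul_assoc, mul_div_cancel_right₀ _ hn.ne']
  · intro i
    have h1 := ((hep i).const_add 1).mul ((wbt_log_div_choose s hs).const_mul (a i))
    have e : p i = fun n => (1 + ep i n) * (a i * (Real.log n / (n.choose s : ℝ))) :=
      funext (hp i)
    rw [e]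
    simpa using h1
  · intro i
    have h1 := (((heN i).const_add 1).mul ((hep i).const_add 1)).mul_const (a i * ρ i)
    have h2 : Tendsto (fun n => (1 + eN i n) * (1 + ep i n) * (a i * ρ i)) atTop
        (nhds (a i * ρ i)) := by simpa using h1
    refine h2.congr' ?_
    filter_upwards [hLpos, eventually_ge_atTop s] with n hn hns
    have hc0 : (n.choose s : ℝ) ≠ 0 := by exact_mod_cast (Nat.choose_pos hns).ne'
    rw [eq_div_iff hn.ne', hN, hp]
    field_simp
end

section
/- Let k ≥ 2 be a fixed integer and α > β > 0 fixed constants. For r = 0, 1, …, k−1 set c_r = 2(k−1−2r), and let Y_r ∼ Bin(N_r, p_r) be independent with N_r = (1+o(1)) (1/2^{k−1}) C(k−1, r) C(n, k−1), p_0 = α log n / C(n, k−1) (1+o(1)) and p_r = β log n / C(n, k−1) (1+o(1)) for 1 ≤ r ≤ k−1. Set X = ∑_{r=0}^{k−1} c_r Y_r. Then Pr(X ≤ −2 log n / log log n) = exp(−(1+o(1)) I_2(α,β) log n), where I_2(α,β) = max_{t ≥ 0} (1/2^{k−1})[α(1 − e^{−(k−1)t}) + β ∑_{a=1}^{k−1}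 C(k−1,a)(1 − e^{−(k−1−2a)t})]. -/
open Finset Filter

open scoped Classical

/-- A weak Stirling upper bound. -/
lemma log_factorial_upper (y : ℕ) (hy : 1 ≤ y) :
    Real.log (y.factorial : ℝ) ≤ y * Real.log y - y + Real.log y + 1 := by
  induction y, hy using Nat.le_induction with
  | base => simp
  | succ y hy ih =>
    have hy0 : (0 : ℝ) < y := by exact_mod_cast hy
    have h1 : Real.log ((y + 1).factorial : ℝ) = Real.log (y + 1) + Real.log (y.factorial : ℝ) := by
      rw [Nat.factorial_succ]
      push_cast
      rw [Real.log_mul (by positivity) (by positivity)]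
    have h2 := Real.one_sub_inv_le_log_of_pos (x := ((y : ℝ) + 1) / y) (by positivity)
    rw [Real.log_div (by positivity) (by positivity)] at h2
    have h3 : 1 - (((y : ℝ) + 1) / y)⁻¹ = 1 / (y + 1) := by field_simp; ring
    rw [h3, div_le_iff₀ (by positivity)] at h2
    rw [h1]
    push_cast
    nlinarith

/-- Nonasymptotic lower bound for the binomial pmf. -/
lemma binomPMF_lower_raw (N : ℕ) (p : ℝ) (y : ℕ) (hp0 : 0 < p) (hp1 : p < 1) (hy : 1 ≤ y)
    (hyN : y ≤ N) :
    Real.exp (y * Real.log (((N : ℝ) + 1 - y) * p) - (y * Real.log y - y + Real.log y + 1)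
      - N * p / (1 - p)) ≤ binomPMF N p y := by
  have hNy : (0 : ℝ) < (N : ℝ) + 1 - y := by
    have : (y : ℝ) ≤ N := by exact_mod_cast hyN
    linarith
  have h1p : 0 < 1 - p := by linarith
  have hA : 0 < ((N : ℝ) + 1 - y) * p := mul_pos hNy hp0
  have hch : ((N : ℝ) + 1 - y) ^ y / (y.factorial : ℝ) ≤ (N.choose y : ℝ) := by
    have := Nat.pow_le_choose (α := ℝ) y N
    rw [Nat.cast_sub (by omega)] at this
    push_cast at this
    exact this
  have hpow : Real.exp (- (N * p / (1 - p))) ≤ (1 - p) ^ (N - y) := by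
    have h1 : (1 - p) ^ N ≤ (1 - p) ^ (N - y) :=
      pow_le_pow_of_le_one h1p.le (by linarith) (Nat.sub_le _ _)
    refine le_trans ?_ h1
    rw [← Real.exp_log (pow_pos h1p N), Real.log_pow]
    apply Real.exp_le_exp.mpr
    have h2 := Real.one_sub_inv_le_log_of_pos h1p
    have h3 : 1 - (1 - p)⁻¹ = - (p / (1 - p)) := by field_simp; ring
    rw [h3] at h2
    have := mul_le_mul_of_nonneg_left h2 (Nat.cast_nonneg (α := ℝ) N)
    calc -(N * p / (1 - p)) = N * -(p / (1 - p)) := by ring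
      _ ≤ _ := this
  have hfac : Real.exp (y * Real.log (((N : ℝ) + 1 - y) * p)
      - (y * Real.log y - y + Real.log y + 1)) ≤ (N.choose y : ℝ) * p ^ y := by
    have h1 : ((N : ℝ) + 1 - y) ^ y / (y.factorial : ℝ) * p ^ y ≤ (N.choose y : ℝ) * p ^ y :=
      mul_le_mul_of_nonneg_right hch (by positivity)
    refine le_trans ?_ h1
    have h2 : ((N : ℝ) + 1 - y) ^ y / (y.factorial : ℝ) * p ^ y
        = (((N : ℝ) + 1 - y) * p) ^ y / (y.factorial : ℝ) := by rw [mul_pow]; ring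
    rw [h2, ← Real.exp_log (show 0 < (((N : ℝ) + 1 - y) * p) ^ y / (y.factorial : ℝ) by positivity)]
    apply Real.exp_le_exp.mpr
    rw [Real.log_div (by positivity) (by positivity), Real.log_pow]
    have := log_factorial_upper y hy
    linarith
  rw [sub_eq_add_neg _ (N * p / (1 - p)), Real.exp_add]
  exact mul_le_mul hfac hpow (Real.exp_pos _).le (by positivity)

/-- Asymptotic lower bound for the binomial pmf in the large-deviation regime. -/
lemma binomPMF_lower (L : ℕ → ℝ) (hL : Tendsto L atTop atTop) (N : ℕ → ℕ) (p : ℕ → ℝ)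
    (y : ℕ → ℕ) (w θ : ℝ) (hw : 0 < w) (hθ : 0 < θ) (hp0 : ∀ᶠ n in atTop, 0 < p n)
    (hp : Tendsto p atTop (nhds 0))
    (hNp : Tendsto (fun n => (N n : ℝ) * p n / L n) atTop (nhds w))
    (hy : Tendsto (fun n => (y n : ℝ) / L n) atTop (nhds θ)) (ε : ℝ) (hε : 0 < ε) :
    ∀ᶠ n in atTop, y n ≤ N n ∧
      Real.exp ((θ * Real.log (w / θ) + θ - w - ε) * L n) ≤ binomPMF (N n) (p n) (y n) := by
  have hLpos : ∀ᶠ n in atTop, 0 < L n := hL.eventually_gt_atTop 0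
  have hLinv : Tendsto (fun n => (L n)⁻¹) atTop (nhds 0) := tendsto_inv_atTop_zero.comp hL
  have hytop : Tendsto (fun n => (y n : ℝ)) atTop atTop := by
    have := hy.pos_mul_atTop hθ hL
    refine this.congr' ?_
    filter_upwards [hLpos] with n hn
    field_simp
  have hA : Tendsto (fun n => ((N n : ℝ) + 1 - y n) * p n / L n) atTop (nhds w) := by
    have h := (hNp.add (hp.mul hLinv)).sub (hp.mul hy)
    simp only [mul_zero, add_zero, zero_mul, sub_zero] at h
    refine h.congr' ?_
    filter_upwards [hLpos] with n hn
    field_simp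
  have hlogy : Tendsto (fun n => Real.log (y n : ℝ) / L n) atTop (nhds 0) := by
    have h1 : Tendsto (fun x : ℝ => Real.log x / x) atTop (nhds 0) := by
      simpa using Real.tendsto_pow_log_div_mul_add_atTop 1 0 1 one_ne_zero
    have h := (h1.comp hytop).mul hy
    simp only [zero_mul] at h
    refine h.congr' ?_
    filter_upwards [hLpos, hytop.eventually_gt_atTop 0] with n hn hyn
    simp only [Function.comp]
    field_simp
  have hlogA : Tendsto (fun n => Real.log ((((N n : ℝ) + 1 - y n) * p n / L n) / ((y n : ℝ) / L n)))
      atTop (nhds (Real.log (w / θ))) :=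
    (hA.div hy hθ.ne').log (by positivity)
  have h1p : Tendsto (fun n => 1 - p n) atTop (nhds 1) := by
    simpa using hp.const_sub 1
  have hT : Tendsto (fun n => ((y n : ℝ) / L n) *
      Real.log ((((N n : ℝ) + 1 - y n) * p n / L n) / ((y n : ℝ) / L n))
      + (y n : ℝ) / L n - Real.log (y n : ℝ) / L n - (L n)⁻¹
      - (N n : ℝ) * p n / L n / (1 - p n)) atTop (nhds (θ * Real.log (w / θ) + θ - w)) := by
    have := ((((hy.mul hlogA).add hy).sub hlogy).sub hLinv).sub (hNp.div h1p one_ne_zero)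
    simpa using this
  have hyN : ∀ᶠ n in atTop, y n ≤ N n := by
    have h1 : Tendsto (fun n => p n * ((y n : ℝ) / L n)) atTop (nhds 0) := by
      simpa using hp.mul hy
    filter_upwards [h1.eventually_lt hNp hw, hLpos, hp0] with n h2 h3 h4
    have h5 : (y n : ℝ) * (p n / L n) < N n * (p n / L n) := by
      calc _ = p n * ((y n : ℝ) / L n) := by ring
        _ < _ := h2
        _ = _ := by ring
    have := lt_of_mul_lt_mul_right h5 (by positivity)
    exact_mod_cast this.le
  filter_upwards [hyN, hLpos, hp0, hp.eventually_lt_const (show (0 : ℝ) < 1 by norm_num),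
    hytop.eventually_ge_atTop 1,
    hT.eventually_const_lt (show θ * Real.log (w / θ) + θ - w - ε < _ by linarith)]
    with n h1 h2 h3 h4 h5 h6
  refine ⟨h1, ?_⟩
  have hy1 : 1 ≤ y n := by exact_mod_cast h5
  refine le_trans (Real.exp_le_exp.mpr ?_) (binomPMF_lower_raw (N n) (p n) (y n) h3 h4 hy1 h1)
  have h7 := mul_le_mul_of_nonneg_right h6.le h2.le
  refine h7.trans (le_of_eq ?_)
  have hNy : (0 : ℝ) < (N n : ℝ) + 1 - y n := by
    have : (y n : ℝ) ≤ N n := by exact_mod_cast h1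
    linarith
  have hy0 : (0 : ℝ) < y n := by linarith
  have h1p' : 1 - p n ≠ 0 := by linarith
  have h8 : (((N n : ℝ) + 1 - y n) * p n / L n) / ((y n : ℝ) / L n)
      = (((N n : ℝ) + 1 - y n) * p n) / y n := by
    field_simp
  rw [h8, Real.log_div (mul_pos hNy h3).ne' hy0.ne']
  field_simp
  ring

lemma binomPMF_nonneg (N : ℕ) (p : ℝ) (y : ℕ) (h0 : 0 ≤ p) (h1 : p ≤ 1) :
    0 ≤ binomPMF N p y := by
  have : 0 ≤ 1 - p := by linarith
  unfold binomPMF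
  positivity

lemma binomPMF_mgf (N : ℕ) (p s : ℝ) :
    ∑ y : Fin (N + 1), binomPMF N p y * s ^ (y : ℕ) = (p * s + (1 - p)) ^ N := by
  rw [Fin.sum_univ_eq_sum_range (fun y => binomPMF N p y * s ^ y) (N + 1), add_pow]
  refine Finset.sum_congr rfl fun y _ => ?_
  unfold binomPMF
  rw [mul_pow]
  ring

/-- The probability in question. -/
noncomputable def tailProb {k : ℕ} (N : Fin k → ℕ) (p c : Fin k → ℝ) (x : ℝ) : ℝ :=
  ∑ y : (r : Fin k) → Fin (N r + 1),
    (∏ r, binomPMF (N r) (p r) (y r)) *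
      (if (∑ r : Fin k, 2 * c r * ((y r : ℕ) : ℝ)) ≤ -(2 * x) then 1 else 0)

/-- Chernoff bound. -/
lemma tailProb_upper {k : ℕ} (N : Fin k → ℕ) (p c : Fin k → ℝ) (x : ℝ)
    (hp0 : ∀ r, 0 ≤ p r) (hp1 : ∀ r, p r ≤ 1) (hx : 0 ≤ x) (t : ℝ) (ht : 0 ≤ t) :
    tailProb N p c x ≤ Real.exp (∑ r, N r * p r * (Real.exp (-(c r * t)) - 1)) := by
  have h1 : tailProb N p c x ≤ ∑ y : (r : Fin k) → Fin (N r + 1),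
      ∏ r, (binomPMF (N r) (p r) (y r) * (Real.exp (-(c r * t))) ^ (y r : ℕ)) := by
    unfold tailProb
    refine Finset.sum_le_sum fun y _ => ?_
    rw [Finset.prod_mul_distrib]
    refine mul_le_mul_of_nonneg_left ?_
      (Finset.prod_nonneg fun r _ => binomPMF_nonneg _ _ _ (hp0 r) (hp1 r))
    split_ifs with h
    · have h2 : ∏ r, (Real.exp (-(c r * t))) ^ (y r : ℕ)
          = Real.exp (∑ r, (y r : ℕ) * (-(c r * t))) := by
        rw [Real.exp_sum]
        refine Finset.prod_congr rfl fun r _ => ?_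
        rw [Real.exp_nat_mul]
      rw [h2]
      apply Real.one_le_exp
      have h3 : ∑ r, ((y r : ℕ) : ℝ) * (-(c r * t))
          = -(t / 2) * ∑ r : Fin k, 2 * c r * ((y r : ℕ) : ℝ) := by
        rw [Finset.mul_sum]
        exact Finset.sum_congr rfl fun r _ => by ring
      rw [h3]
      nlinarith
    · exact Finset.prod_nonneg fun r _ => by positivity
  refine h1.trans ?_
  have h2 := Finset.prod_univ_sum (fun r : Fin k => (Finset.univ : Finset (Fin (N r + 1))))
    (fun r (y : Fin (N r + 1)) => binomPMF (N r) (p r) y * (Real.exp (-(c r * t))) ^ (y : ℕ))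
  rw [Fintype.piFinset_univ] at h2
  rw [← h2, Real.exp_sum]
  refine Finset.prod_le_prod (fun r _ => Finset.sum_nonneg fun y _ =>
    mul_nonneg (binomPMF_nonneg _ _ _ (hp0 r) (hp1 r)) (by positivity)) fun r _ => ?_
  rw [binomPMF_mgf, mul_assoc, Real.exp_nat_mul]
  have h3 : 0 ≤ p r * Real.exp (-(c r * t)) + (1 - p r) := by
    have := mul_nonneg (hp0 r) (Real.exp_pos (-(c r * t))).le
    linarith [hp1 r]
  refine pow_le_pow_left₀ h3 ?_ _
  have := Real.add_one_le_exp (p r * (Real.exp (-(c r * t)) - 1))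
  linarith

/-- A single-point lower bound. -/
lemma tailProb_lower {k : ℕ} (N : Fin k → ℕ) (p c : Fin k → ℝ) (x : ℝ)
    (hp0 : ∀ r, 0 ≤ p r) (hp1 : ∀ r, p r ≤ 1) (y : Fin k → ℕ) (hy : ∀ r, y r ≤ N r)
    (hyx : ∑ r : Fin k, c r * (y r : ℝ) ≤ -x) :
    ∏ r, binomPMF (N r) (p r) (y r) ≤ tailProb N p c x := by
  have h := Finset.single_le_sum (s := Finset.univ)
    (f := fun y : (r : Fin k) → Fin (N r + 1) => (∏ r, binomPMF (N r) (p r) (y r)) *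
      (if (∑ r : Fin k, 2 * c r * ((y r : ℕ) : ℝ)) ≤ -(2 * x) then (1 : ℝ) else 0))
    (fun y _ => mul_nonneg (Finset.prod_nonneg fun r _ =>
      binomPMF_nonneg _ _ _ (hp0 r) (hp1 r)) (by split_ifs <;> norm_num))
    (Finset.mem_univ (fun r => ⟨y r, Nat.lt_succ_of_le (hy r)⟩))
  refine le_trans (le_of_eq ?_) h
  have h2 : ∑ r : Fin k, 2 * c r * (y r : ℝ) ≤ -(2 * x) := by
    have : ∑ r : Fin k, 2 * c r * (y r : ℝ) = 2 * ∑ r : Fin k, c r * (y r : ℝ) := by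
      rw [Finset.mul_sum]
      exact Finset.sum_congr rfl fun r _ => by ring
    linarith
  simp only [h2, if_true, mul_one]

/-- The two-sided large deviation estimate. -/
lemma tailProb_asymp {k : ℕ} (L : ℕ → ℝ) (hL : Tendsto L atTop atTop) (N : ℕ → Fin k → ℕ)
    (p : ℕ → Fin k → ℝ) (c w : Fin k → ℝ) (x : ℕ → ℝ) (hw : ∀ r, 0 < w r)
    (hp0 : ∀ r, ∀ᶠ n in atTop, 0 < p n r)
    (hp : ∀ r, Tendsto (fun n => p n r) atTop (nhds 0))
    (hNp : ∀ r, Tendsto (fun n => (N n r : ℝ) * p n r / L n) atTop (nhds (w r)))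
    (hx0 : ∀ᶠ n in atTop, 0 ≤ x n) (hx : Tendsto (fun n => x n / L n) atTop (nhds 0))
    (r₀ : Fin k) (hr₀ : c r₀ < 0) (t : ℝ) (ht : 0 ≤ t)
    (hcrit : ∑ r, w r * c r * Real.exp (-(c r * t)) = 0) (ε : ℝ) (hε : 0 < ε) :
    ∀ᶠ n in atTop,
      Real.exp (-((∑ r, w r * (1 - Real.exp (-(c r * t))) + ε) * L n)) ≤ tailProb (N n) (p n) c (x n) ∧
      tailProb (N n) (p n) c (x n)
        ≤ Real.exp (-((∑ r, w r * (1 - Real.exp (-(c r * t))) - ε) * L n)) := by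
  have hLpos : ∀ᶠ n in atTop, 0 < L n := hL.eventually_gt_atTop 0
  have hLinv : Tendsto (fun n => (L n)⁻¹) atTop (nhds 0) := tendsto_inv_atTop_zero.comp hL
  have hp0' : ∀ᶠ n in atTop, ∀ r, 0 < p n r := eventually_all.mpr hp0
  have hp1' : ∀ᶠ n in atTop, ∀ r, p n r < 1 :=
    eventually_all.mpr fun r => (hp r).eventually_lt_const (by norm_num)
  refine Filter.Eventually.and ?_ ?_
  · -- lower bound
    set θ : Fin k → ℝ := fun r => w r * Real.exp (-(c r * t)) with hθdef
    have hθ : ∀ r, 0 < θ r := fun r => mul_pos (hw r) (Real.exp_pos _)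
    set C : ℝ := ∑ r, |c r| with hC
    have hC0 : 0 ≤ C := Finset.sum_nonneg fun r _ => abs_nonneg _
    set E : ℕ → ℕ := fun n => ⌈(x n + C) / (-c r₀)⌉₊ with hE
    have hc0 : 0 < -c r₀ := by linarith
    have hEL : Tendsto (fun n => (E n : ℝ) / L n) atTop (nhds 0) := by
      have hup : Tendsto (fun n => (x n / L n + C * (L n)⁻¹) / (-c r₀) + (L n)⁻¹) atTop (nhds 0) := by
        have := ((hx.add (hLinv.const_mul C)).div_const (-c r₀)).add hLinv
        simpa using this
      refine squeeze_zero' ?_ ?_ hup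
      · filter_upwards [hLpos] with n hn
        positivity
      · filter_upwards [hLpos, hx0] with n hn hxn
        have h1 : (E n : ℝ) ≤ (x n + C) / (-c r₀) + 1 :=
          (Nat.ceil_lt_add_one (by positivity)).le
        calc (E n : ℝ) / L n ≤ ((x n + C) / (-c r₀) + 1) / L n := by gcongr
          _ = _ := by field_simp
    set y : ℕ → Fin k → ℕ := fun n r => ⌊θ r * L n⌋₊ + if r = r₀ then E n else 0 with hy
    have hyL : ∀ r, Tendsto (fun n => (y n r : ℝ) / L n) atTop (nhds (θ r)) := by
      intro r
      have h1 : Tendsto (fun n => (⌊θ r * L n⌋₊ : ℝ) / L n) atTop (nhds (θ r)) :=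
        (tendsto_nat_floor_mul_div_atTop (hθ r).le).comp hL
      by_cases hr : r = r₀
      · have := h1.add hEL
        simp only [add_zero] at this
        refine this.congr fun n => ?_
        simp only [hy, hr, if_true]
        push_cast
        ring
      · simpa only [hy, hr, if_false, add_zero] using h1
    have hk : (0 : ℝ) < k := by
      have := r₀.pos
      exact_mod_cast this
    have hεk : 0 < ε / k := by positivity
    have hall : ∀ᶠ n in atTop, ∀ r, y n r ≤ N n r ∧
        Real.exp ((θ r * Real.log (w r / θ r) + θ r - w r - ε / k) * L n)
          ≤ binomPMF (N n r) (p n r) (y n r) :=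
      eventually_all.mpr fun r => binomPMF_lower L hL (fun n => N n r) (fun n => p n r)
        (fun n => y n r) (w r) (θ r) (hw r) (hθ r) (hp0 r) (hp r) (hNp r) (hyL r) (ε / k) hεk
    filter_upwards [hall, hp0', hp1', hLpos, hx0] with n h1 h2 h3 h4 h5
    refine le_trans ?_ (tailProb_lower (N n) (p n) c (x n) (fun r => (h2 r).le)
      (fun r => (h3 r).le) (y n) (fun r => (h1 r).1) ?_)
    · refine le_trans (le_of_eq ?_) (Finset.prod_le_prod (fun r _ => (Real.exp_pos _).le)
        (fun r _ => (h1 r).2))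
      rw [← Real.exp_sum, ← Finset.sum_mul, ← neg_mul]
      congr 2
      have h6 : ∀ r, θ r * Real.log (w r / θ r) + θ r - w r - ε / k
          = t * (w r * c r * Real.exp (-(c r * t))) - w r * (1 - Real.exp (-(c r * t))) - ε / k := by
        intro r
        have h7 : w r / θ r = Real.exp (c r * t) := by
          simp only [hθdef]
          rw [Real.exp_neg]
          have := (hw r).ne'
          field_simp
        rw [h7, Real.log_exp]
        simp only [hθdef]
        ring
      have h8 : (k : ℝ) * (ε / k) = ε := by field_simp
      simp only [h6, Finset.sum_sub_distrib, ← Finset.mul_sum, hcrit, Finset.sum_const,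
        Finset.card_univ, Fintype.card_fin, nsmul_eq_mul, h8]
      ring
    · -- the linear constraint
      have h6 : ∀ r, c r * (y n r : ℝ) ≤ c r * (θ r * L n) + |c r|
          + if r = r₀ then c r₀ * E n else 0 := by
        intro r
        have hf1 := Nat.floor_le (mul_pos (hθ r) h4).le
        have hf2 := (Nat.lt_floor_add_one (θ r * L n)).le
        have h7 : c r * (⌊θ r * L n⌋₊ : ℝ) ≤ c r * (θ r * L n) + |c r| := by
          rcases le_total 0 (c r) with h | h
          · nlinarith [abs_nonneg (c r)]
          · rw [abs_of_nonpos h]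
            nlinarith
        by_cases hr : r = r₀
        · subst hr
          simp only [hy, if_true]
          push_cast
          linarith
        · simp only [hy, hr, if_false, add_zero]
          linarith
      refine (Finset.sum_le_sum fun r _ => h6 r).trans ?_
      rw [Finset.sum_add_distrib, Finset.sum_add_distrib, Finset.sum_ite_eq' Finset.univ r₀]
      simp only [Finset.mem_univ, if_true]
      have h8 : ∑ r, c r * (θ r * L n) = 0 := by
        have : ∑ r, c r * (θ r * L n) = (∑ r, w r * c r * Real.exp (-(c r * t))) * L n := by
          rw [Finset.sum_mul]
          exact Finset.sum_congr rfl fun r _ => by simp only [hθdef]; ring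
        rw [this, hcrit, zero_mul]
      have h9 : (x n + C) / (-c r₀) ≤ E n := Nat.le_ceil _
      rw [div_le_iff₀ hc0] at h9
      rw [h8, ← hC]
      linarith
  · have hT : Tendsto (fun n => ∑ r, (N n r : ℝ) * p n r / L n * (Real.exp (-(c r * t)) - 1)) atTop
        (nhds (∑ r, w r * (Real.exp (-(c r * t)) - 1))) :=
      tendsto_finsetSum _ fun r _ => (hNp r).mul_const _
    have hS : ∑ r, w r * (Real.exp (-(c r * t)) - 1) = -∑ r, w r * (1 - Real.exp (-(c r * t))) := by
      rw [← Finset.sum_neg_distrib]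
      exact Finset.sum_congr rfl fun r _ => by ring
    rw [hS] at hT
    filter_upwards [hT.eventually_lt_const (lt_add_of_pos_right _ hε), hp0', hp1', hLpos, hx0]
      with n h1 h2 h3 h4 h5
    refine (tailProb_upper (N n) (p n) c (x n) (fun r => (h2 r).le)
      (fun r => (h3 r).le) h5 t ht).trans (Real.exp_le_exp.mpr ?_)
    have h6 := mul_le_mul_of_nonneg_right h1.le h4.le
    rw [Finset.sum_mul] at h6
    refine le_trans (le_of_eq ?_) (h6.trans (le_of_eq (by ring)))
    exact Finset.sum_congr rfl fun r _ => by field_simp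

/-- Existence of the interior maximiser of the rate function. -/
lemma exists_max_rate {k : ℕ} (c w : Fin k → ℝ) (hw : ∀ r, 0 < w r) (r₀ : Fin k) (hr₀ : c r₀ < 0)
    (hpos : 0 < ∑ r, w r * c r) :
    ∃ t : ℝ, 0 ≤ t ∧ ∑ r, w r * c r * Real.exp (-(c r * t)) = 0 ∧
      0 < ∑ r, w r * (1 - Real.exp (-(c r * t))) ∧
      ∀ s : ℝ, 0 ≤ s → ∑ r, w r * (1 - Real.exp (-(c r * s)))
        ≤ ∑ r, w r * (1 - Real.exp (-(c r * t))) := by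
  set Φ : ℝ → ℝ := fun t => ∑ r, w r * (1 - Real.exp (-(c r * t))) with hΦ
  have hder : ∀ t, HasDerivAt Φ (∑ r, w r * c r * Real.exp (-(c r * t))) t := by
    intro t
    have : ∀ r ∈ (Finset.univ : Finset (Fin k)),
        HasDerivAt (fun t => w r * (1 - Real.exp (-(c r * t))))
        (w r * c r * Real.exp (-(c r * t))) t := by
      intro r _
      have h1 : HasDerivAt (fun t => -(c r * t)) (-(c r)) t := by
        simpa using ((hasDerivAt_id t).const_mul (c r)).fun_neg
      have h2 := (h1.exp.const_sub 1).const_mul (w r)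
      exact h2.congr_deriv (by ring)
    exact HasDerivAt.fun_sum this
  have hcont : Continuous Φ := continuous_iff_continuousAt.mpr fun t => (hder t).continuousAt
  have hΦ0 : Φ 0 = 0 := by simp [hΦ]
  set W : ℝ := ∑ r, w r with hW
  have hW0 : 0 ≤ W := Finset.sum_nonneg fun r _ => (hw r).le
  have hwc : 0 < w r₀ * (-c r₀) := mul_pos (hw r₀) (by linarith)
  set T : ℝ := W / (w r₀ * (-c r₀)) with hT
  have hT0 : 0 ≤ T := by positivity
  have hbig : ∀ s, T ≤ s → Φ s ≤ 0 := by
    intro s hs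
    have h1 : w r₀ * Real.exp (-(c r₀ * s)) ≤ ∑ r, w r * Real.exp (-(c r * s)) :=
      Finset.single_le_sum (f := fun r => w r * Real.exp (-(c r * s)))
        (fun r _ => (mul_pos (hw r) (Real.exp_pos _)).le) (Finset.mem_univ r₀)
    have h2 : Φ s = W - ∑ r, w r * Real.exp (-(c r * s)) := by
      simp only [hΦ, hW, ← Finset.sum_sub_distrib]
      exact Finset.sum_congr rfl fun r _ => by ring
    have h3 := mul_le_mul_of_nonneg_left (Real.add_one_le_exp (-(c r₀ * s))) (hw r₀).le
    have h4 : W ≤ s * (w r₀ * (-c r₀)) := by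
      rwa [hT, div_le_iff₀ hwc] at hs
    have h5 := hw r₀
    rw [h2]
    nlinarith
  obtain ⟨t, ht, hmax⟩ := (isCompact_Icc (a := (0 : ℝ)) (b := T)).exists_isMaxOn
    ⟨0, by simp [hT0]⟩ hcont.continuousOn
  have hmax' : ∀ s, 0 ≤ s → Φ s ≤ Φ t := by
    intro s hs
    rcases le_total s T with h | h
    · exact hmax ⟨hs, h⟩
    · refine (hbig s h).trans ?_
      rw [← hΦ0]
      exact hmax ⟨le_rfl, hT0⟩
  have hex : ∃ s, 0 < s ∧ 0 < Φ s := by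
    have h1 := (hder 0).tendsto_slope_zero_right
    have h2 : 0 < ∑ r, w r * c r * Real.exp (-(c r * 0)) := by simpa using hpos
    have h3 := (h1.eventually_const_lt h2).and self_mem_nhdsWithin
    obtain ⟨s, hs1, hs2⟩ := h3.exists
    have hs2' : (0 : ℝ) < s := hs2
    refine ⟨s, hs2', ?_⟩
    simp only [zero_add, hΦ0, sub_zero, smul_eq_mul] at hs1
    exact (pos_iff_pos_of_mul_pos hs1).mp (by positivity)
  obtain ⟨s, hs, hs'⟩ := hex
  have hΦt : 0 < Φ t := hs'.trans_le (hmax' s hs.le)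
  have ht0 : 0 < t := by
    rcases ht.1.eq_or_lt with h | h
    · rw [← h, hΦ0] at hΦt
      exact absurd hΦt (lt_irrefl _)
    · exact h
  refine ⟨t, ht.1, ?_, hΦt, hmax'⟩
  have hloc : IsLocalMax Φ t := by
    filter_upwards [lt_mem_nhds ht0] with s hs
    exact hmax' s hs.le
  exact hloc.hasDerivAt_eq_zero (hder t)

lemma sum_choose_antisymm (m : ℕ) :
    ∑ r ∈ Finset.range (m + 1), (m.choose r : ℝ) * ((m : ℝ) - 2 * r) = 0 := by
  have h := Finset.sum_range_reflect (fun r => (m.choose r : ℝ) * ((m : ℝ) - 2 * r)) (m + 1)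
  have h2 : ∑ j ∈ Finset.range (m + 1), (m.choose (m + 1 - 1 - j) : ℝ)
      * ((m : ℝ) - 2 * ((m + 1 - 1 - j : ℕ) : ℝ))
      = - ∑ r ∈ Finset.range (m + 1), (m.choose r : ℝ) * ((m : ℝ) - 2 * r) := by
    rw [← Finset.sum_neg_distrib]
    refine Finset.sum_congr rfl fun j hj => ?_
    have hj' : j ≤ m := by simpa [Nat.lt_succ_iff] using hj
    rw [Nat.add_sub_cancel, Nat.choose_symm hj', Nat.cast_sub hj']
    ring
  linarith

lemma choose_ge_linear (m : ℕ) (hm : 1 ≤ m) :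
    ∀ᶠ n : ℕ in atTop, (n : ℝ) / m ≤ (n.choose m : ℝ) := by
  filter_upwards [eventually_ge_atTop (m + m)] with n hn
  obtain ⟨j, rfl⟩ : ∃ j, m = j + 1 := ⟨m - 1, by omega⟩
  obtain ⟨i, rfl⟩ : ∃ i, n = i + 1 := ⟨n - 1, by omega⟩
  have h := Nat.add_one_mul_choose_eq i j
  have h1 : 1 ≤ i.choose j := Nat.choose_pos (by omega)
  rw [div_le_iff₀ (by positivity)]
  have h2 : i + 1 ≤ (i + 1).choose (j + 1) * (j + 1) := by
    rw [← h]
    exact Nat.le_mul_of_pos_right _ h1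
  exact_mod_cast h2

/-- For `X = ∑_{r=0}^{k-1} 2(k-1-2r) Y_r` with independent binomials
`Y_r ∼ Bin((1+o(1)) 2^{-(k-1)} C(k-1,r) C(n,k-1), p_r)` with `p_0 ≈ α log n / C(n,k-1)` and
`p_r ≈ β log n / C(n,k-1)` for `r ≥ 1`:
`Pr(X ≤ -2 log n / log log n) = exp(-(1+o(1)) I₂(α,β) log n)`. -/
theorem trunc_tail_bound (k : ℕ) (hk : 2 ≤ k) (α β : ℝ) (hβ : 0 < β) (hαβ : β < α)
    (N : ℕ → Fin k → ℕ) (p : ℕ → Fin k → ℝ)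
    (hN : ∃ eN : ℕ → Fin k → ℝ, (∀ r, Tendsto (fun n => eN n r) atTop (nhds 0)) ∧
      ∀ n r, ((N n r : ℕ) : ℝ)
        = (1 + eN n r) * ((1 / 2 ^ (k - 1)) * (((k - 1).choose (r : ℕ) : ℝ) *
            (n.choose (k - 1) : ℝ))))
    (hp : ∃ ep : ℕ → Fin k → ℝ, (∀ r, Tendsto (fun n => ep n r) atTop (nhds 0)) ∧
      ∀ n r, p n r = (1 + ep n r) *
        ((if (r : ℕ) = 0 then α else β) * Real.log n / (n.choose (k - 1) : ℝ))) :
    ∃ ε : ℕ → ℝ, Tendsto ε atTop (nhds 0) ∧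
      ∀ᶠ n : ℕ in atTop,
        (∑ y : (r : Fin k) → Fin (N n r + 1),
            (∏ r, binomPMF (N n r) (p n r) (y r)) *
              (if (∑ r : Fin k, 2 * ((k : ℝ) - 1 - 2 * ((r : ℕ) : ℝ)) * ((y r : ℕ) : ℝ))
                  ≤ -(2 * Real.log n / Real.log (Real.log n)) then 1 else 0))
          = Real.exp (-((1 + ε n) *
              (sSup {z : ℝ | ∃ t : ℝ, 0 ≤ t ∧
                  z = (1 / 2 ^ (k - 1)) * (α * (1 - Real.exp (-(((k : ℝ) - 1) * t))) +
                    β * ∑ a ∈ Finset.Icc 1 (k - 1),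
                      ((k - 1).choose a : ℝ) *
                        (1 - Real.exp (-(((k : ℝ) - 1 - 2 * (a : ℝ)) * t))))} *
                Real.log n))) := by
  obtain ⟨eN, heN, hN⟩ := hN
  obtain ⟨ep, hep, hp⟩ := hp
  obtain ⟨m, rfl⟩ : ∃ m, k = m + 1 := ⟨k - 1, by omega⟩
  have hm : 1 ≤ m := by omega
  simp only [Nat.add_sub_cancel] at hN hp ⊢
  have hα : 0 < α := hβ.trans hαβ
  have hm0 : (0 : ℝ) < m := by exact_mod_cast hm
  set c : Fin (m + 1) → ℝ := fun r => (((m + 1 : ℕ) : ℝ) - 1 - 2 * ((r : ℕ) : ℝ)) with hc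
  set γ : ℕ → ℝ := fun r => if r = 0 then α else β with hγ
  have hγ0 : ∀ r, 0 < γ r := by
    intro r
    simp only [hγ]
    split_ifs <;> assumption
  set w : Fin (m + 1) → ℝ := fun r => (1 / 2 ^ m) * ((m.choose (r : ℕ) : ℝ) * γ r) with hwdef
  have hw : ∀ r, 0 < w r := by
    intro r
    have h1 : 0 < m.choose (r : ℕ) := Nat.choose_pos (Nat.lt_succ_iff.mp r.2)
    have h2 : (0 : ℝ) < m.choose (r : ℕ) := by exact_mod_cast h1
    have := hγ0 r
    simp only [hwdef]
    positivity
  set L : ℕ → ℝ := fun n => Real.log n with hLdef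
  have hL : Tendsto L atTop atTop := Real.tendsto_log_atTop.comp tendsto_natCast_atTop_atTop
  have hLpos : ∀ᶠ n in atTop, 0 < L n := hL.eventually_gt_atTop 0
  have hM : ∀ᶠ n : ℕ in atTop, (0 : ℝ) < (n.choose m : ℝ) := by
    filter_upwards [eventually_ge_atTop m] with n hn
    exact_mod_cast Nat.choose_pos hn
  have hLM : Tendsto (fun n : ℕ => L n / (n.choose m : ℝ)) atTop (nhds 0) := by
    have h1 : Tendsto (fun x : ℝ => Real.log x / x) atTop (nhds 0) := by
      simpa using Real.tendsto_pow_log_div_mul_add_atTop 1 0 1 one_ne_zero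
    have h2 := (h1.comp (tendsto_natCast_atTop_atTop (R := ℝ))).const_mul (m : ℝ)
    simp only [mul_zero] at h2
    refine squeeze_zero' ?_ ?_ h2
    · filter_upwards [hLpos, hM] with n h3 h4
      positivity
    · filter_upwards [hLpos, hM, choose_ge_linear m hm, eventually_gt_atTop 0] with n h3 h4 h5 h6
      have h7 : (0 : ℝ) < n := by exact_mod_cast h6
      simp only [Function.comp]
      calc L n / (n.choose m : ℝ) ≤ L n / ((n : ℝ) / m) :=
            div_le_div_of_nonneg_left h3.le (by positivity) h5
        _ = m * (Real.log n / n) := by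
            simp only [hLdef]
            field_simp
  have h1e : ∀ r, Tendsto (fun n => 1 + ep n r) atTop (nhds 1) := fun r => by
    simpa using (hep r).const_add 1
  have h1N : ∀ r, Tendsto (fun n => 1 + eN n r) atTop (nhds 1) := fun r => by
    simpa using (heN r).const_add 1
  have hp' : ∀ n r, p n r = (1 + ep n r) * (γ r * (L n / (n.choose m : ℝ))) := by
    intro n r
    rw [hp n r, mul_div_assoc]
  have hp0 : ∀ r, ∀ᶠ n in atTop, 0 < p n r := by
    intro r
    filter_upwards [hLpos, hM, (h1e r).eventually_const_lt zero_lt_one] with n h1 h2 h3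
    rw [hp']
    have := hγ0 r
    positivity
  have hpt : ∀ r, Tendsto (fun n => p n r) atTop (nhds 0) := by
    intro r
    have := (h1e r).mul (hLM.const_mul (γ r))
    simp only [mul_zero] at this
    exact this.congr fun n => (hp' n r).symm
  have hNp : ∀ r, Tendsto (fun n => (N n r : ℝ) * p n r / L n) atTop (nhds (w r)) := by
    intro r
    have := ((h1N r).mul (h1e r)).mul_const (w r)
    simp only [one_mul] at this
    refine this.congr' ?_
    filter_upwards [hLpos, hM] with n h1 h2
    rw [hN, hp']
    simp only [hwdef]
    field_simp
  set x : ℕ → ℝ := fun n => L n / Real.log (L n) with hx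
  have hlogL : Tendsto (fun n => Real.log (L n)) atTop atTop := Real.tendsto_log_atTop.comp hL
  have hx0 : ∀ᶠ n in atTop, 0 ≤ x n := by
    filter_upwards [hLpos, hlogL.eventually_gt_atTop 0] with n h1 h2
    simp only [hx]
    positivity
  have hxL : Tendsto (fun n => x n / L n) atTop (nhds 0) := by
    refine (tendsto_inv_atTop_zero.comp hlogL).congr' ?_
    filter_upwards [hLpos] with n h1
    simp only [hx, Function.comp]
    field_simp
  have hr₀ : c (Fin.last m) < 0 := by
    simp only [hc, Fin.val_last]
    push_cast
    linarith
  have hpos : 0 < ∑ r, w r * c r := by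
    have h1 : ∀ r : Fin (m + 1), w r * c r = (fun r : ℕ => (1 / 2 ^ m) * β *
        ((m.choose r : ℝ) * ((m : ℝ) - 2 * r))
        + if r = 0 then (1 / 2 ^ m) * (α - β) * m else 0) (r : ℕ) := by
      intro r
      simp only [hwdef, hc, hγ]
      push_cast
      split_ifs with h
      · rw [h]
        simp
        ring
      · ring
    rw [Finset.sum_congr rfl fun r _ => h1 r, Fin.sum_univ_eq_sum_range (fun r : ℕ => (1 / 2 ^ m) * β *
        ((m.choose r : ℝ) * ((m : ℝ) - 2 * r))
        + if r = 0 then (1 / 2 ^ m) * (α - β) * m else 0) (m + 1), Finset.sum_add_distrib,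
      ← Finset.mul_sum, sum_choose_antisymm, Finset.sum_ite_eq' (Finset.range (m + 1)) 0]
    simp only [Finset.mem_range, Nat.succ_pos, if_true, mul_zero, zero_add]
    have : 0 < α - β := by linarith
    positivity
  obtain ⟨t, ht, hcrit, hI, hmax⟩ := exists_max_rate c w hw (Fin.last m) hr₀ hpos
  set I : ℝ := ∑ r, w r * (1 - Real.exp (-(c r * t))) with hIdef
  have hrate : ∀ s : ℝ, (1 / 2 ^ m) * (α * (1 - Real.exp (-((((m + 1 : ℕ) : ℝ) - 1) * s))) +
      β * ∑ a ∈ Finset.Icc 1 m, (m.choose a : ℝ) *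
        (1 - Real.exp (-((((m + 1 : ℕ) : ℝ) - 1 - 2 * (a : ℝ)) * s))))
      = ∑ r, w r * (1 - Real.exp (-(c r * s))) := by
    intro s
    have h1 := Fin.sum_univ_eq_sum_range (fun r : ℕ => (1 / 2 ^ m) * ((m.choose r : ℝ) * γ r) *
      (1 - Real.exp (-((((m + 1 : ℕ) : ℝ) - 1 - 2 * (r : ℝ)) * s)))) (m + 1)
    simp only [hwdef, hc]
    rw [h1, Finset.range_eq_Ico, Finset.sum_eq_sum_Ico_succ_bot (Nat.succ_pos m)]
    have h2 : Finset.Ico (0 + 1) (m + 1) = Finset.Icc 1 m := by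
      ext a
      simp
    rw [h2, mul_add, Finset.mul_sum, Finset.mul_sum]
    congr 1
    · simp [hγ]
      ring
    · refine Finset.sum_congr rfl fun a ha => ?_
      have h3 : a ≠ 0 := by
        have := (Finset.mem_Icc.mp ha).1
        omega
      simp only [hγ, h3, if_false]
      ring
  have hsup : sSup {z : ℝ | ∃ t : ℝ, 0 ≤ t ∧
      z = (1 / 2 ^ m) * (α * (1 - Real.exp (-((((m + 1 : ℕ) : ℝ) - 1) * t))) +
        β * ∑ a ∈ Finset.Icc 1 m, (m.choose a : ℝ) *
          (1 - Real.exp (-((((m + 1 : ℕ) : ℝ) - 1 - 2 * (a : ℝ)) * t))))} = I := by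
    apply IsGreatest.csSup_eq
    constructor
    · exact ⟨t, ht, (hrate t).symm⟩
    · rintro z ⟨s, hs, rfl⟩
      rw [hrate s]
      exact hmax s hs
  rw [hsup]
  have hP : ∀ n, (∑ y : (r : Fin (m + 1)) → Fin (N n r + 1),
      (∏ r, binomPMF (N n r) (p n r) (y r)) *
        (if (∑ r : Fin (m + 1), 2 * (((m + 1 : ℕ) : ℝ) - 1 - 2 * ((r : ℕ) : ℝ)) * ((y r : ℕ) : ℝ))
          ≤ -(2 * Real.log n / Real.log (Real.log n)) then (1 : ℝ) else 0))
      = tailProb (N n) (p n) c (x n) := by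
    intro n
    simp only [tailProb, hc, hx, hLdef, mul_div_assoc]
  have hmain := tailProb_asymp L hL N p c w x hw hp0 hpt hNp hx0 hxL (Fin.last m) hr₀ t ht hcrit
  refine ⟨fun n => -Real.log (tailProb (N n) (p n) c (x n)) / (I * L n) - 1, ?_, ?_⟩
  · rw [Metric.tendsto_nhds]
    intro δ hδ
    filter_upwards [hmain (δ / 2 * I) (by positivity), hLpos] with n h1 h2
    obtain ⟨h3, h4⟩ := h1
    have h5 : 0 < tailProb (N n) (p n) c (x n) := (Real.exp_pos _).trans_le h3
    have h6 := (Real.le_log_iff_exp_le h5).mpr h3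
    have h7 := (Real.log_le_iff_le_exp h5).mpr h4
    rw [← hIdef] at h6 h7
    have hIL : 0 < I * L n := by positivity
    rw [Real.dist_eq, sub_zero, abs_lt]
    constructor
    · rw [lt_sub_iff_add_lt, lt_div_iff₀ hIL]
      nlinarith [mul_pos hδ hIL]
    · rw [sub_lt_iff_lt_add, div_lt_iff₀ hIL]
      nlinarith [mul_pos hδ hIL]
  · filter_upwards [hmain 1 one_pos, hLpos] with n h1 h2
    have h5 : 0 < tailProb (N n) (p n) c (x n) := (Real.exp_pos _).trans_le h1.1
    rw [hP n]
    have h6 : -((1 + (-Real.log (tailProb (N n) (p n) c (x n)) / (I * L n) - 1)) * (I * L n))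
        = Real.log (tailProb (N n) (p n) c (x n)) := by
      have hIL : I * L n ≠ 0 := (mul_pos hI h2).ne'
      field_simp
      ring
    show _ = Real.exp (-((1 + (-Real.log (tailProb (N n) (p n) c (x n)) / (I * L n) - 1))
      * (I * L n)))
    rw [h6, Real.exp_log h5]
end
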